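/- Let g : ℝ^p → ℝ^m be continuously differentiable on a convex set Θ with Jacobian G, Lipschitz with constant L, W symmetric positive definite, and θ̂ ∈ Θ with G(θ̂)ᵀ W g(θ̂) = 0. Then for any θ ∈ Θ: |[g(θ) − g(θ̂)]ᵀ W g(θ̂)| ≤ √(λ_max(W)) · L · ‖g(θ̂)‖_W · ‖θ − θ̂‖². -/

import Mathlib

open Matrix Set MeasureTheory
open scoped BigOperators

noncomputable section

/-- Euclidean norm of a vector in `Fin n → ℝ`. -/
def enorm' {n : ℕ} (v : Fin n → ℝ) : ℝ := Real.sqrt (∑ i, v i ^ 2)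

/-- Smallest singular value of a matrix. -/
def sigMin {m p : ℕ} (A : Matrix (Fin m) (Fin p) ℝ) : ℝ :=
  sInf {c : ℝ | ∃ v : Fin p → ℝ, enorm' v = 1 ∧ c = enorm' (A *ᵥ v)}

/-- Largest singular value of a matrix (operator norm). -/
def sigMax {m p : ℕ} (A : Matrix (Fin m) (Fin p) ℝ) : ℝ :=
  sSup {c : ℝ | ∃ v : Fin p → ℝ, enorm' v = 1 ∧ c = enorm' (A *ᵥ v)}

/-- Smallest eigenvalue of a (symmetric) square matrix, via the Rayleigh quotient. -/
def lamMin {n : ℕ} (A : Matrix (Fin n) (Fin n) ℝ) : ℝ :=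
  sInf {c : ℝ | ∃ v : Fin n → ℝ, enorm' v = 1 ∧ c = v ⬝ᵥ (A *ᵥ v)}

/-- Largest eigenvalue of a (symmetric) square matrix, via the Rayleigh quotient. -/
def lamMax {n : ℕ} (A : Matrix (Fin n) (Fin n) ℝ) : ℝ :=
  sSup {c : ℝ | ∃ v : Fin n → ℝ, enorm' v = 1 ∧ c = v ⬝ᵥ (A *ᵥ v)}

/-- Weighted norm `‖v‖_W = √(vᵀ W v)`. -/
def wnorm {m : ℕ} (W : Matrix (Fin m) (Fin m) ℝ) (v : Fin m → ℝ) : ℝ :=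
  Real.sqrt (v ⬝ᵥ (W *ᵥ v))

/-- A matrix viewed as a continuous linear map `ℝ^p → ℝ^m`. -/
def toCLM {m p : ℕ} (A : Matrix (Fin m) (Fin p) ℝ) : (Fin p → ℝ) →L[ℝ] (Fin m → ℝ) :=
  LinearMap.toContinuousLinearMap A.mulVecLin

lemma enorm'_nonneg {n : ℕ} (v : Fin n → ℝ) : 0 ≤ enorm' v := Real.sqrt_nonneg _

lemma enorm'_sq {n : ℕ} (v : Fin n → ℝ) : enorm' v ^ 2 = v ⬝ᵥ v := by
  unfold enorm'
  rw [Real.sq_sqrt (Finset.sum_nonneg fun i _ => sq_nonneg _)]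
  simp [dotProduct, pow_two]

lemma enorm'_smul {n : ℕ} (c : ℝ) (v : Fin n → ℝ) : enorm' (c • v) = |c| * enorm' v := by
  unfold enorm'
  rw [← Real.sqrt_sq_eq_abs, ← Real.sqrt_mul (sq_nonneg c), Finset.mul_sum]
  simp [mul_pow]

lemma enorm'_eq_zero {n : ℕ} {v : Fin n → ℝ} (h : enorm' v = 0) : v = 0 := by
  have := enorm'_sq v
  rw [h] at this
  exact dotProduct_self_eq_zero.1 (by linarith)

lemma continuous_enorm' {n : ℕ} : Continuous (enorm' : (Fin n → ℝ) → ℝ) := by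
  unfold enorm'
  fun_prop

lemma compact_sphere' {n : ℕ} : IsCompact {v : Fin n → ℝ | enorm' v = 1} := by
  refine Metric.isCompact_of_isClosed_isBounded
    (isClosed_eq continuous_enorm' continuous_const) ?_
  refine (Metric.isBounded_closedBall (x := (0 : Fin n → ℝ)) (r := 1)).subset ?_
  intro v hv
  rw [mem_closedBall_zero_iff, pi_norm_le_iff_of_nonneg zero_le_one]
  intro i
  have h1 : enorm' v = 1 := hv
  have h2 : ∑ i, v i ^ 2 = 1 := by
    have h3 := enorm'_sq v
    rw [h1] at h3
    simp only [dotProduct, ← pow_two] at h3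
    linarith
  have h4 : v i ^ 2 ≤ 1 := by
    rw [← h2]
    exact Finset.single_le_sum (f := fun i => v i ^ 2) (fun i _ => sq_nonneg _) (Finset.mem_univ i)
  rw [Real.norm_eq_abs]
  exact (sq_le_one_iff_abs_le_one _).1 h4

lemma le_sup_sphere {n : ℕ} (f : (Fin n → ℝ) → ℝ) (hf : Continuous f) (v : Fin n → ℝ)
    (hv : enorm' v = 1) :
    f v ≤ sSup {c : ℝ | ∃ v : Fin n → ℝ, enorm' v = 1 ∧ c = f v} := by
  apply le_csSup
  · have := (compact_sphere' (n := n)).bddAbove_image hf.continuousOn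
    refine this.mono ?_
    rintro c ⟨v, hv, rfl⟩
    exact ⟨v, hv, rfl⟩
  · exact ⟨v, hv, rfl⟩

lemma enorm'_unit {n : ℕ} (v : Fin n → ℝ) (h : enorm' v ≠ 0) :
    enorm' ((enorm' v)⁻¹ • v) = 1 := by
  rw [enorm'_smul, abs_of_nonneg (inv_nonneg.2 (enorm'_nonneg v)), inv_mul_cancel₀ h]

lemma mulVec_le_sigMax {m p : ℕ} (A : Matrix (Fin m) (Fin p) ℝ) (v : Fin p → ℝ) :
    enorm' (A *ᵥ v) ≤ sigMax A * enorm' v := by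
  by_cases h : enorm' v = 0
  · rw [enorm'_eq_zero h]
    simp [enorm']
  have h1 := le_sup_sphere (fun v => enorm' (A *ᵥ v))
    (continuous_enorm'.comp (by fun_prop)) _ (enorm'_unit v h)
  have hp : 0 < enorm' v := lt_of_le_of_ne (enorm'_nonneg v) (Ne.symm h)
  simp only [mulVec_smul, enorm'_smul, abs_of_nonneg (inv_nonneg.2 hp.le)] at h1
  rw [inv_mul_le_iff₀ hp] at h1
  rw [mul_comm]
  exact h1

lemma quad_le_lamMax {n : ℕ} (A : Matrix (Fin n) (Fin n) ℝ) (v : Fin n → ℝ) :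
    v ⬝ᵥ (A *ᵥ v) ≤ lamMax A * enorm' v ^ 2 := by
  by_cases h : enorm' v = 0
  · rw [enorm'_eq_zero h]
    simp [enorm']
  have h1 := le_sup_sphere (fun v => v ⬝ᵥ (A *ᵥ v)) (by fun_prop) _ (enorm'_unit v h)
  have hp : 0 < enorm' v := lt_of_le_of_ne (enorm'_nonneg v) (Ne.symm h)
  simp only [mulVec_smul, smul_dotProduct, dotProduct_smul, smul_eq_mul] at h1
  rw [inv_mul_le_iff₀ hp, inv_mul_le_iff₀ hp] at h1
  unfold lamMax
  linarith

lemma abs_dot_le {n : ℕ} (u v : Fin n → ℝ) : |u ⬝ᵥ v| ≤ enorm' u * enorm' v := by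
  refine abs_le_of_sq_le_sq ?_ (mul_nonneg (enorm'_nonneg u) (enorm'_nonneg v))
  unfold enorm'
  rw [mul_pow, Real.sq_sqrt (Finset.sum_nonneg fun i _ => sq_nonneg _),
    Real.sq_sqrt (Finset.sum_nonneg fun i _ => sq_nonneg _)]
  exact Finset.sum_mul_sq_le_sq_mul_sq _ _ _

lemma enorm'_mulVec_le {n : ℕ} (W : Matrix (Fin n) (Fin n) ℝ) (hW : W.PosDef)
    (x : Fin n → ℝ) : enorm' (W *ᵥ x) ≤ Real.sqrt (lamMax W) * wnorm W x := by
  have hpos : ∀ y : Fin n → ℝ, 0 ≤ y ⬝ᵥ (W *ᵥ y) := fun y => by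
    simpa using hW.posSemidef.dotProduct_mulVec_nonneg y
  have hT : Wᵀ = W := by simpa using hW.isHermitian.eq
  by_cases h : enorm' (W *ᵥ x) = 0
  · rw [h]
    exact mul_nonneg (Real.sqrt_nonneg _) (Real.sqrt_nonneg _)
  have hp : 0 < enorm' (W *ᵥ x) := lt_of_le_of_ne (enorm'_nonneg _) (Ne.symm h)
  set u := W *ᵥ x with hu
  have hb : u ⬝ᵥ (W *ᵥ x) = enorm' u ^ 2 := by rw [enorm'_sq]
  have hb2 : x ⬝ᵥ (W *ᵥ u) = enorm' u ^ 2 := by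
    rw [enorm'_sq, dotProduct_mulVec, ← mulVec_transpose, hT]
  have hcs : discrim (u ⬝ᵥ (W *ᵥ u)) (2 * enorm' u ^ 2) (x ⬝ᵥ (W *ᵥ x)) ≤ 0 := by
    apply discrim_le_zero
    intro t
    have h1 := hpos (t • u + x)
    simp only [mulVec_add, mulVec_smul, dotProduct_add, add_dotProduct, smul_dotProduct,
      dotProduct_smul, smul_eq_mul, hb, hb2] at h1
    linarith
  have ha := quad_le_lamMax W u
  have hc := hpos x
  have ha0 := hpos u
  unfold discrim at hcs
  have hb0 : 0 < enorm' u ^ 2 := by positivity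
  have hl : 0 ≤ lamMax W := nonneg_of_mul_nonneg_left (ha0.trans ha) hb0
  have key : enorm' u ^ 2 ≤ lamMax W * (x ⬝ᵥ (W *ᵥ x)) := by
    have h2 := mul_le_mul_of_nonneg_right ha hc
    refine le_of_mul_le_mul_left ?_ hb0
    nlinarith
  unfold wnorm
  rw [← Real.sqrt_mul hl]
  exact Real.le_sqrt_of_sq_le key

/-- Cross-term bound from the first-order condition and Lipschitz continuity
of the Jacobian. -/
theorem cross_term_bound
    {p m : ℕ} (Θ : Set (Fin p → ℝ))
    (g : (Fin p → ℝ) → (Fin m → ℝ))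
    (G : (Fin p → ℝ) → Matrix (Fin m) (Fin p) ℝ)
    (W : Matrix (Fin m) (Fin m) ℝ)
    (θhat : Fin p → ℝ) (L : ℝ)
    (hΘconv : Convex ℝ Θ)
    (hg : ContDiffOn ℝ 1 g Θ)
    (hG : ∀ θ ∈ Θ, HasFDerivWithinAt g (toCLM (G θ)) Θ θ)
    (hL : 0 ≤ L)
    (hLip : ∀ θ₁ ∈ Θ, ∀ θ₂ ∈ Θ, sigMax (G θ₁ - G θ₂) ≤ L * enorm' (θ₁ - θ₂))
    (hW : W.PosDef)
    (hθhat : θhat ∈ Θ)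
    (hfoc : (G θhat)ᵀ *ᵥ (W *ᵥ g θhat) = 0) :
    ∀ θ ∈ Θ,
      |(g θ - g θhat) ⬝ᵥ (W *ᵥ g θhat)|
        ≤ Real.sqrt (lamMax W) * L * wnorm W (g θhat) * enorm' (θ - θhat) ^ 2 := by
  intro θ hθ
  set u := W *ᵥ g θhat with hu
  have hmem : ∀ t ∈ Icc (0:ℝ) 1, θhat + t • (θ - θhat) ∈ Θ := fun t ht =>
    hΘconv.add_smul_sub_mem hθhat hθ ht
  have hder : ∀ t ∈ Icc (0:ℝ) 1, HasDerivWithinAt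
      (fun t : ℝ => g (θhat + t • (θ - θhat)) ⬝ᵥ u)
      ((G (θhat + t • (θ - θhat)) *ᵥ (θ - θhat)) ⬝ᵥ u) (Icc 0 1) t := by
    intro t ht
    have h1 : HasDerivWithinAt (fun t : ℝ => θhat + t • (θ - θhat)) (θ - θhat) (Icc 0 1) t := by
      simpa using (((hasDerivAt_id t).smul_const (θ - θhat)).const_add θhat).hasDerivWithinAt
    have h2 := (hG _ (hmem t ht)).comp_hasDerivWithinAt t h1 hmem
    rw [hasDerivWithinAt_pi] at h2
    simp only [dotProduct]
    exact HasDerivWithinAt.fun_sum fun i _ => (h2 i).mul_const (u i)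
  have hd0 := enorm'_nonneg (θ - θhat)
  have hu0 := enorm'_nonneg u
  have hbound : ∀ t ∈ Ico (0:ℝ) 1,
      ‖(G (θhat + t • (θ - θhat)) *ᵥ (θ - θhat)) ⬝ᵥ u‖
        ≤ L * enorm' (θ - θhat) ^ 2 * enorm' u := by
    intro t ht
    have hz : (G θhat *ᵥ (θ - θhat)) ⬝ᵥ u = 0 := by
      rw [dotProduct_comm, dotProduct_mulVec, ← mulVec_transpose, hfoc, zero_dotProduct]
    have h1 : (G (θhat + t • (θ - θhat)) *ᵥ (θ - θhat)) ⬝ᵥ u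
        = ((G (θhat + t • (θ - θhat)) - G θhat) *ᵥ (θ - θhat)) ⬝ᵥ u := by
      rw [sub_mulVec, sub_dotProduct, hz, sub_zero]
    rw [h1, Real.norm_eq_abs]
    refine (abs_dot_le _ _).trans (mul_le_mul_of_nonneg_right ?_ hu0)
    refine (mulVec_le_sigMax _ _).trans ?_
    have h2 := hLip _ (hmem t ⟨ht.1, ht.2.le⟩) _ hθhat
    rw [add_sub_cancel_left, enorm'_smul, abs_of_nonneg ht.1] at h2
    have h3 : L * (t * enorm' (θ - θhat)) ≤ L * enorm' (θ - θhat) :=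
      mul_le_mul_of_nonneg_left (mul_le_of_le_one_left hd0 ht.2.le) hL
    have h4 := mul_le_mul_of_nonneg_right (h2.trans h3) hd0
    linarith
  have hmv := norm_image_sub_le_of_norm_deriv_le_segment_01' hder hbound
  simp only [one_smul, zero_smul, add_zero, add_sub_cancel, Real.norm_eq_abs,
    ← sub_dotProduct] at hmv
  refine hmv.trans ?_
  have h5 := mul_le_mul_of_nonneg_left (enorm'_mulVec_le W hW (g θhat))
    (mul_nonneg hL (sq_nonneg (enorm' (θ - θhat))))
  refine h5.trans (le_of_eq ?_)
  ring
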